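/- Weil reciprocity for ℙ¹ in degree 2: let k be a field and f, g ∈ k(x)^× two nonzero rational functions. Then Σ_P Tr^{k(P)}_k ∂_P({f, g}) = 0 in K^M_1(k) = k^×, where the sum runs over all closed points P of ℙ¹_k, ∂_P is the tame symbol at P, and Tr is the norm map k(P)^× → k^×. Explicitly: ∏_P N_{k(P)/k}( (−1)^{v_P(f)v_P(g)} f^{v_P(g)} g^{−v_P(f)} mod m_P ) = 1. -/

import Mathlib

open Polynomial UniqueFactorizationMonoid

/-- The order of vanishing `v_p(f)` of a rational function `f` at the finite closed
point of `ℙ¹_k` given by the (monic irreducible) polynomial `p`. -/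
noncomputable def ordAt {k : Type*} [Field k] [DecidableEq k] (p : Polynomial k) (f : RatFunc k) : ℤ :=
  ((normalizedFactors f.num).count p : ℤ) - ((normalizedFactors f.denom).count p : ℤ)

/-- The residue at `p` (in the residue field `k(p) = k[x]/(p)`) of a rational function
whose valuation at `p` is `0`. -/
noncomputable def residueAt {k : Type*} [Field k] (p : Polynomial k) (f : RatFunc k) :
    AdjoinRoot p :=
  AdjoinRoot.mk p f.num * Ring.inverse (AdjoinRoot.mk p f.denom)

/-- The tame symbol `∂_p({f,g}) = (−1)^{v_p(f)v_p(g)} f^{v_p(g)} g^{−v_p(f)} mod m_p`. -/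
noncomputable def tameAt {k : Type*} [Field k] [DecidableEq k] (p : Polynomial k)
    (f g : RatFunc k) : AdjoinRoot p :=
  residueAt p ((-1 : RatFunc k) ^ (ordAt p f * ordAt p g)
    * f ^ (ordAt p g) * g ^ (-(ordAt p f)))

/-- The order of vanishing at the place at infinity: `v_∞(f) = −intDegree f`. -/
noncomputable def ordInf {k : Type*} [Field k] (f : RatFunc k) : ℤ := -f.intDegree

/-- The residue at infinity of a rational function with `v_∞ = 0`: the ratio of the
leading coefficients of numerator and denominator. -/
noncomputable def residueInf {k : Type*} [Field k] (f : RatFunc k) : k :=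
  f.num.leadingCoeff / f.denom.leadingCoeff

/-- The tame symbol at the place at infinity (residue field `k`). -/
noncomputable def tameInf {k : Type*} [Field k] (f g : RatFunc k) : k :=
  residueInf ((-1 : RatFunc k) ^ (ordInf f * ordInf g)
    * f ^ (ordInf g) * g ^ (-(ordInf f)))

section Helpers

theorem norm_mk_aux {k : Type*} [Field k] (p q : Polynomial k) (hp : p.Monic) (hq : q.Monic) :
    algebraMap k (AlgebraicClosure k) (Algebra.norm k (AdjoinRoot.mk p q)) =
      algebraMap k (AlgebraicClosure k) ((-1) ^ (q.natDegree * p.natDegree) * resultant q p) := by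
  classical
  set A := AlgebraicClosure k
  set φ := algebraMap k A
  let pb := AdjoinRoot.powerBasis hp.ne_zero
  let M := Algebra.leftMulMatrix pb.basis pb.gen
  have hM : M.charpoly = p := by
    rw [charpoly_leftMulMatrix, AdjoinRoot.minpoly_powerBasis_gen_of_monic hp]
  let M' := M.map φ
  have hM' : M'.charpoly = p.map φ := by rw [Matrix.charpoly_map, hM]
  have hdim : Fintype.card (Fin pb.dim) = p.natDegree := by simp [pb]
  have h1 : Algebra.norm k (AdjoinRoot.mk p q) = (aeval M q).det := by
    rw [Algebra.norm_eq_matrix_det pb.basis, ← AdjoinRoot.aeval_eq, ← Polynomial.aeval_algHom_apply]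
    rfl
  have h2 : φ (aeval M q).det = (aeval M' (q.map φ)).det := by
    rw [RingHom.map_det]
    congr 1
    have := Polynomial.map_aeval_eq_aeval_map (R := k) (S := Matrix (Fin pb.dim) (Fin pb.dim) k)
      (T := A) (U := Matrix (Fin pb.dim) (Fin pb.dim) A) (φ := φ) (ψ := φ.mapMatrix) (by
        ext x i j
        simp [Matrix.algebraMap_matrix_apply, apply_ite φ]) q M
    exact this
  let F : A[X] →* A := (Matrix.detMonoidHom (n := Fin pb.dim) (R := A)).comp
    (MonoidHomClass.toMonoidHom (aeval M' : A[X] →ₐ[A] Matrix (Fin pb.dim) (Fin pb.dim) A))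
  have hs : (q.map φ).Splits := IsAlgClosed.splits _
  have hqm : (q.map φ).Monic := hq.map φ
  have h3 : (aeval M' (q.map φ)).det = F (q.map φ) := rfl
  have h4 : ∀ β : A, F (X - C β) = (-1) ^ p.natDegree * (p.map φ).eval β := by
    intro β
    have : F (X - C β) = (M' - Matrix.scalar _ β).det := by
      simp only [F, MonoidHom.comp_apply, Matrix.coe_detMonoidHom]
      congr 1
      simp [Matrix.algebraMap_eq_diagonal]
    rw [this, ← hM', Matrix.eval_charpoly, ← neg_sub, Matrix.det_neg, hdim]
  have h5 : F (q.map φ) = ((q.map φ).roots.map fun β => (-1) ^ p.natDegree * (p.map φ).eval β).prod := by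
    conv_lhs => rw [hs.eq_prod_roots_of_monic hqm]
    rw [map_multiset_prod, Multiset.map_map]
    congr 1
    exact Multiset.map_congr rfl fun β _ => h4 β
  have h6 := resultant_eq_prod_eval (q.map φ) (p.map φ) p.natDegree (natDegree_map_le) hs
  rw [h1, h2, h3, h5, Multiset.prod_map_mul, Multiset.map_const', Multiset.prod_replicate,
    ← hs.natDegree_eq_card_roots, map_mul]
  rw [hqm.leadingCoeff, one_pow, one_mul, natDegree_map, resultant_map_map] at h6
  rw [← h6, natDegree_map]
  simp [pow_mul', φ]

theorem norm_mk_eq {k : Type*} [Field k] (p q : Polynomial k) (hp : p.Monic) (hq : q.Monic) :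
    Algebra.norm k (AdjoinRoot.mk p q) = resultant p q := by
  rw [resultant_comm, mul_comm p.natDegree]
  exact (algebraMap k (AlgebraicClosure k)).injective (norm_mk_aux p q hp hq)

theorem isUnit_mk {k : Type*} [Field k] {p V : Polynomial k} (hp : Irreducible p) (hV : ¬ p ∣ V) :
    IsUnit (AdjoinRoot.mk p V) := by
  have : Fact (Irreducible p) := ⟨hp⟩
  exact IsUnit.mk0 _ (by rwa [Ne, AdjoinRoot.mk_eq_zero])

theorem residueAt_mul {k : Type*} [Field k] {p U V : Polynomial k} (hp : Irreducible p)
    (hV : ¬ p ∣ V) (h : RatFunc k)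
    (hh : h = algebraMap _ (RatFunc k) U / algebraMap _ (RatFunc k) V) :
    residueAt p h * AdjoinRoot.mk p V = AdjoinRoot.mk p U := by
  have hV0 : V ≠ 0 := fun h => hV (h ▸ dvd_zero p)
  have e := (RatFunc.num_mul_eq_mul_denom_iff hV0).2 hh
  have hd : ¬ p ∣ h.denom := fun hd => hV (hd.trans ((RatFunc.denom_dvd hV0).2 ⟨U, hh⟩))
  have hu := isUnit_mk hp hd
  have e' := congrArg (AdjoinRoot.mk p) e
  rw [map_mul, map_mul] at e'
  unfold residueAt
  calc _ = (AdjoinRoot.mk p h.num * AdjoinRoot.mk p V) * Ring.inverse (AdjoinRoot.mk p h.denom) := by ring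
    _ = _ := by rw [e', mul_assoc, Ring.mul_inverse_cancel _ hu, mul_one]

theorem zpow_eq_toNat {K : Type*} [Field K] (x : K) (hx : x ≠ 0) (n : ℤ) :
    x ^ n = x ^ n.toNat / x ^ (-n).toNat := by
  rw [← zpow_natCast, ← zpow_natCast, ← zpow_sub₀ hx, Int.toNat_sub_toNat_neg]

/-- numerator -/
noncomputable def uu {k : Type*} [Field k] (S : Finset k[X]) (n : k[X] → ℤ) : k[X] :=
  ∏ q ∈ S, q ^ (n q).toNat

theorem prod_zpow_eq {k : Type*} [Field k] (S : Finset k[X]) (hS : ∀ q ∈ S, q.Monic) (n : k[X] → ℤ)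
    (e : k) :
    algebraMap k[X] (RatFunc k) (C e) * ∏ q ∈ S, (algebraMap k[X] (RatFunc k) q) ^ (n q) =
      algebraMap k[X] (RatFunc k) (C e * uu S n) / algebraMap _ (RatFunc k) (uu S (fun q => - n q)) := by
  simp only [uu, map_mul, map_prod, map_pow, mul_div_assoc]
  rw [← Finset.prod_div_distrib]
  congr 1
  refine Finset.prod_congr rfl fun q hq => zpow_eq_toNat _ ?_ _
  exact RatFunc.algebraMap_ne_zero (hS q hq).ne_zero

theorem uu_monic {k : Type*} [Field k] (S : Finset k[X]) (hS : ∀ q ∈ S, q.Monic) (n : k[X] → ℤ) :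
    (uu S n).Monic :=
  monic_prod_of_monic _ _ fun q hq => (hS q hq).pow _

theorem residueInf_eq {k : Type*} [Field k] (S : Finset k[X]) (hS : ∀ q ∈ S, q.Monic) (n : k[X] → ℤ)
    (e : k) (h : RatFunc k)
    (hh : h = algebraMap k[X] (RatFunc k) (C e) * ∏ q ∈ S, (algebraMap k[X] (RatFunc k) q) ^ (n q)) :
    residueInf h = e := by
  rw [prod_zpow_eq S hS] at hh
  have e1 := (RatFunc.num_mul_eq_mul_denom_iff (uu_monic S hS _).ne_zero).2 hh
  have e2 := congrArg leadingCoeff e1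
  simp only [leadingCoeff_mul, (uu_monic S hS _).leadingCoeff, leadingCoeff_C, mul_one] at e2
  unfold residueInf
  rw [e2, (RatFunc.monic_denom h).leadingCoeff]
  simp

open Classical in
/-- off-diagonal norm -/
noncomputable def offNorm {k : Type*} [Field k] (p q : k[X]) : k :=
  if p = q then 1 else Algebra.norm k (AdjoinRoot.mk p q)

theorem not_dvd {k : Type*} [Field k] {p q : k[X]} (hp : Irreducible p) (hpm : p.Monic)
    (hq : Irreducible q) (hqm : q.Monic) (hne : p ≠ q) : ¬ p ∣ q := fun h =>
  hne (eq_of_monic_of_associated hpm hqm (hp.associated_of_dvd hq h))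

theorem norm_ne_zero' {k : Type*} [Field k] {p q : k[X]} (hp : Irreducible p) (h : ¬ p ∣ q) :
    Algebra.norm k (AdjoinRoot.mk p q) ≠ 0 :=
  ((isUnit_mk hp h).map (Algebra.norm k)).ne_zero

theorem offNorm_ne_zero {k : Type*} [Field k] {p q : k[X]} (hp : Irreducible p) (hpm : p.Monic)
    (hq : Irreducible q) (hqm : q.Monic) : offNorm p q ≠ 0 := by
  unfold offNorm
  split_ifs with h
  · exact one_ne_zero
  · exact norm_ne_zero' hp (not_dvd hp hpm hq hqm h)

theorem offNorm_div {k : Type*} [Field k] {p q : k[X]} (hp : Irreducible p) (hpm : p.Monic)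
    (hq : Irreducible q) (hqm : q.Monic) (hne : p ≠ q) :
    offNorm p q / offNorm q p = (-1) ^ (p.natDegree * q.natDegree) := by
  rw [div_eq_iff (offNorm_ne_zero hq hqm hp hpm)]
  unfold offNorm
  rw [if_neg hne, if_neg hne.symm, norm_mk_eq p q hpm hqm, norm_mk_eq q p hqm hpm, resultant_comm]

theorem norm_uu {k : Type*} [Field k] (S : Finset k[X]) (n : k[X] → ℤ) (p : k[X]) (hn : n p = 0) :
    Algebra.norm k (AdjoinRoot.mk p (uu S n)) = ∏ q ∈ S, offNorm p q ^ (n q).toNat := by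
  simp only [uu, map_prod, map_pow]
  refine Finset.prod_congr rfl fun q hq => ?_
  unfold offNorm
  split_ifs with h
  · subst h; simp [hn]
  · rfl

theorem norm_residueAt {k : Type*} [Field k] (S : Finset k[X]) (hS : ∀ q ∈ S, q.Monic)
    (hI : ∀ q ∈ S, Irreducible q) (n : k[X] → ℤ) (p : k[X]) (hpS : p ∈ S) (hn : n p = 0)
    (e : k) (h : RatFunc k)
    (hh : h = algebraMap k[X] (RatFunc k) (C e) * ∏ q ∈ S, (algebraMap k[X] (RatFunc k) q) ^ (n q)) :
    Algebra.norm k (residueAt p h) = e ^ p.natDegree * ∏ q ∈ S, offNorm p q ^ n q := by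
  have hp := hI p hpS
  have hpm := hS p hpS
  rw [prod_zpow_eq S hS] at hh
  have hV : ¬ p ∣ uu S (fun q => - n q) := by
    unfold uu
    rw [hp.prime.dvd_finsetProd_iff]
    rintro ⟨q, hq, hd⟩
    by_cases hpq : p = q
    · subst hpq
      simp only [hn, neg_zero, Int.toNat_zero, pow_zero] at hd
      exact hp.not_isUnit (isUnit_of_dvd_one hd)
    · exact not_dvd hp hpm (hI q hq) (hS q hq) hpq (hp.prime.dvd_of_dvd_pow hd)
  have e1 := congrArg (Algebra.norm k) (residueAt_mul hp hV h hh)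
  have hc : Algebra.norm k (AdjoinRoot.mk p (C e)) = e ^ p.natDegree := by
    have := Algebra.norm_algebraMap (R := k) (S := AdjoinRoot p) e
    rw [(AdjoinRoot.powerBasis hpm.ne_zero).finrank, AdjoinRoot.powerBasis_dim] at this
    rw [← this]; rfl
  rw [map_mul, map_mul, map_mul, hc] at e1
  refine mul_right_cancel₀ (norm_ne_zero' hp hV) ?_
  rw [e1, norm_uu _ _ _ hn,
    norm_uu _ _ _ (by simp [hn]), mul_assoc, ← Finset.prod_mul_distrib]
  congr 1
  refine Finset.prod_congr rfl fun q hq => ?_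
  have h0 := offNorm_ne_zero hp hpm (hI q hq) (hS q hq)
  rw [zpow_eq_toNat _ h0, div_mul_cancel₀ _ (pow_ne_zero _ h0)]

theorem poly_fac {k : Type*} [Field k] [DecidableEq k] (u : k[X]) (S : Finset k[X])
    (h1 : (normalizedFactors u).toFinset ⊆ S) :
    u = C u.leadingCoeff * ∏ q ∈ S, q ^ (normalizedFactors u).count q := by
  conv_lhs => rw [← leadingCoeff_mul_prod_normalizedFactors u,
    Finset.prod_multiset_count_of_subset _ S h1]

theorem fac {k : Type*} [Field k] [DecidableEq k] (f : RatFunc k) (S : Finset k[X])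
    (hS : ∀ q ∈ S, q.Monic)
    (h1 : (normalizedFactors f.num).toFinset ⊆ S) (h2 : (normalizedFactors f.denom).toFinset ⊆ S) :
    f = algebraMap k[X] (RatFunc k) (C f.num.leadingCoeff) *
      ∏ q ∈ S, (algebraMap k[X] (RatFunc k) q) ^ (ordAt q f) := by
  have e1 := poly_fac f.num S h1
  have e2 := poly_fac f.denom S h2
  rw [(RatFunc.monic_denom f).leadingCoeff, C_1, one_mul] at e2
  conv_lhs => rw [← RatFunc.num_div_denom f, e1, e2]
  rw [map_mul, map_prod, map_prod, mul_div_assoc, ← Finset.prod_div_distrib]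
  congr 1
  refine Finset.prod_congr rfl fun q hq => ?_
  have h0 := RatFunc.algebraMap_ne_zero (hS q hq).ne_zero
  rw [ordAt, zpow_sub₀ h0, zpow_natCast, zpow_natCast, map_pow, map_pow]

theorem poly_deg {k : Type*} [Field k] [DecidableEq k] (u : k[X]) (hu : u ≠ 0) (S : Finset k[X])
    (hS : ∀ q ∈ S, q.Monic) (h1 : (normalizedFactors u).toFinset ⊆ S) :
    u.natDegree = ∑ q ∈ S, (normalizedFactors u).count q * q.natDegree := by
  conv_lhs => rw [poly_fac u S h1]
  rw [natDegree_C_mul (leadingCoeff_ne_zero.2 hu),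
    natDegree_prod_of_monic _ _ fun q hq => (hS q hq).pow _]
  simp

theorem deg_eq {k : Type*} [Field k] [DecidableEq k] (f : RatFunc k) (hf : f ≠ 0) (S : Finset k[X])
    (hS : ∀ q ∈ S, q.Monic)
    (h1 : (normalizedFactors f.num).toFinset ⊆ S) (h2 : (normalizedFactors f.denom).toFinset ⊆ S) :
    f.intDegree = ∑ q ∈ S, ordAt q f * q.natDegree := by
  rw [RatFunc.intDegree, poly_deg _ (RatFunc.num_ne_zero hf) S hS h1,
    poly_deg _ (RatFunc.denom_ne_zero f) S hS h2]
  push_cast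
  rw [← Finset.sum_sub_distrib]
  refine Finset.sum_congr rfl fun q _ => ?_
  rw [ordAt, sub_mul]

theorem combo {k : Type*} [Field k] (S : Finset k[X]) (hS : ∀ q ∈ S, q.Monic)
    (f g : RatFunc k) (a b : k[X] → ℤ) (c d : k)
    (hf : f = algebraMap k[X] (RatFunc k) (C c) * ∏ q ∈ S, (algebraMap k[X] (RatFunc k) q) ^ a q)
    (hg : g = algebraMap k[X] (RatFunc k) (C d) * ∏ q ∈ S, (algebraMap k[X] (RatFunc k) q) ^ b q)
    (s m n : ℤ) :
    (-1 : RatFunc k) ^ s * f ^ m * g ^ n =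
      algebraMap k[X] (RatFunc k) (C ((-1) ^ s * c ^ m * d ^ n)) *
      ∏ q ∈ S, (algebraMap k[X] (RatFunc k) q) ^ (a q * m + b q * n) := by
  have h1 : ∏ q ∈ S, (algebraMap k[X] (RatFunc k) q) ^ (a q * m + b q * n) =
      (∏ q ∈ S, (algebraMap k[X] (RatFunc k) q) ^ a q) ^ m *
      (∏ q ∈ S, (algebraMap k[X] (RatFunc k) q) ^ b q) ^ n := by
    rw [← Finset.prod_zpow, ← Finset.prod_zpow, ← Finset.prod_mul_distrib]
    refine Finset.prod_congr rfl fun q hq => ?_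
    rw [zpow_add₀ (RatFunc.algebraMap_ne_zero (hS q hq).ne_zero), zpow_mul, zpow_mul]
  rw [h1, hf, hg, mul_zpow, mul_zpow]
  simp only [RatFunc.algebraMap_C, map_mul, map_zpow₀, map_neg, map_one]
  ring

theorem prod_zpow_sum {k ι : Type*} [Field k] (x : k) (hx : x ≠ 0) (S : Finset ι) (n : ι → ℤ) :
    ∏ q ∈ S, x ^ n q = x ^ ∑ q ∈ S, n q := by
  classical
  induction S using Finset.induction_on with
  | empty => simp
  | insert i s hi ih => rw [Finset.prod_insert hi, Finset.sum_insert hi, ih, zpow_add₀ hx]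

theorem neg_one_zpow_sq {k : Type*} [Field k] (d : ℕ) (m : ℤ) :
    ((-1 : k) ^ (d * d)) ^ m = ((-1 : k) ^ m) ^ d := by
  rw [← zpow_natCast, ← zpow_natCast, ← zpow_mul, ← zpow_mul]
  rcases Int.even_or_odd m with h | h
  · rw [(h.mul_left _).neg_one_zpow, (h.mul_right _).neg_one_zpow]
  · rcases Nat.even_or_odd d with h' | h'
    · have h2 : Even (d : ℤ) := by exact_mod_cast h'
      have h3 : Even (((d * d : ℕ)) : ℤ) := by exact_mod_cast h'.mul_left d
      rw [(h3.mul_right _).neg_one_zpow, (h2.mul_left _).neg_one_zpow]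
    · have h2 : Odd (d : ℤ) := by exact_mod_cast h'
      have h3 : Odd (((d * d : ℕ)) : ℤ) := by exact_mod_cast h'.mul h'
      rw [(h3.mul h).neg_one_zpow, (h.mul h2).neg_one_zpow]

theorem sign_part {k : Type*} [Field k] (S : Finset k[X]) (hS : ∀ q ∈ S, q.Monic)
    (hI : ∀ q ∈ S, Irreducible q) (a b : k[X] → ℤ) :
    (∏ p ∈ S, ((-1 : k) ^ (a p * b p)) ^ p.natDegree) *
      ∏ p ∈ S, ∏ q ∈ S, offNorm p q ^ (a q * b p + b q * (-a p)) =
    (-1) ^ ((∑ q ∈ S, a q * q.natDegree) * (∑ q ∈ S, b q * q.natDegree)) := by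
  classical
  have h1 : ∏ p ∈ S, ∏ q ∈ S, offNorm p q ^ (a q * b p + b q * (-a p)) =
      ∏ p ∈ S, ∏ q ∈ S, (offNorm p q / offNorm q p) ^ (a q * b p) := by
    have : ∏ p ∈ S, ∏ q ∈ S, offNorm p q ^ (a q * b p + b q * (-a p)) =
        (∏ p ∈ S, ∏ q ∈ S, offNorm p q ^ (a q * b p)) *
        ∏ p ∈ S, ∏ q ∈ S, (offNorm p q ^ (a p * b q))⁻¹ := by
      simp only [← Finset.prod_mul_distrib]
      refine Finset.prod_congr rfl fun p hp => Finset.prod_congr rfl fun q hq => ?_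
      rw [zpow_add₀ (offNorm_ne_zero (hI p hp) (hS p hp) (hI q hq) (hS q hq)), ← zpow_neg]
      congr 2
      ring
    rw [this, Finset.prod_comm (f := fun p q => (offNorm p q ^ (a p * b q))⁻¹)]
    simp only [← Finset.prod_mul_distrib]
    refine Finset.prod_congr rfl fun p hp => Finset.prod_congr rfl fun q hq => ?_
    rw [div_zpow, div_eq_mul_inv]
  rw [h1, ← Finset.prod_mul_distrib]
  have hm : (-1 : k) ≠ 0 := neg_ne_zero.2 one_ne_zero
  rw [Finset.sum_mul_sum, Finset.sum_comm, ← prod_zpow_sum _ hm]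
  refine Finset.prod_congr rfl fun p hp => ?_
  rw [← prod_zpow_sum _ hm]
  have h2 : ((-1 : k) ^ (a p * b p)) ^ p.natDegree =
      ∏ q ∈ S, if q = p then ((-1 : k) ^ (a p * b p)) ^ p.natDegree else 1 := by
    rw [Finset.prod_ite_eq' S p, if_pos hp]
  rw [h2, ← Finset.prod_mul_distrib]
  refine Finset.prod_congr rfl fun q hq => ?_
  have h3 : (-1 : k) ^ (a q * (q.natDegree : ℤ) * (b p * (p.natDegree : ℤ))) =
      ((-1 : k) ^ (p.natDegree * q.natDegree)) ^ (a q * b p) := by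
    rw [← zpow_natCast, ← zpow_mul]
    congr 1
    push_cast
    ring
  rw [h3]
  split_ifs with h
  · subst h
    rw [neg_one_zpow_sq, div_self (offNorm_ne_zero (hI q hq) (hS q hq) (hI q hq) (hS q hq)),
      one_zpow, mul_one]
  · rw [one_mul, offNorm_div (hI p hp) (hS p hp) (hI q hq) (hS q hq) (Ne.symm h)]

end Helpers

/-- Weil reciprocity for `ℙ¹_k` in degree 2: for nonzero rational functions `f, g`,
the product over all closed points `P` of `N_{k(P)/k}(∂_P({f,g}))` equals `1`.
(Only the points dividing the numerators or denominators of `f` and `g`, together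
with the point at infinity, contribute nontrivially.) -/
theorem stmt_16 {k : Type*} [Field k] [DecidableEq k] (f g : RatFunc k)
    (hf : f ≠ 0) (hg : g ≠ 0) :
    (∏ p ∈ (normalizedFactors (f.num * f.denom * g.num * g.denom)).toFinset,
        Algebra.norm k (tameAt p f g)) * tameInf f g = 1 := by
  set S := (normalizedFactors (f.num * f.denom * g.num * g.denom)).toFinset with hSdef
  have n1 := RatFunc.num_ne_zero hf
  have n2 := RatFunc.denom_ne_zero f
  have n3 := RatFunc.num_ne_zero hg
  have n4 := RatFunc.denom_ne_zero g
  have hS : ∀ q ∈ S, q.Monic := fun q hq => by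
    have hq' := Multiset.mem_toFinset.1 hq
    have := normalize_normalized_factor q hq'
    rw [← this]
    exact monic_normalize (irreducible_of_normalized_factor q hq').ne_zero
  have hI : ∀ q ∈ S, Irreducible q := fun q hq =>
    irreducible_of_normalized_factor q (Multiset.mem_toFinset.1 hq)
  have hSe : S = (normalizedFactors f.num).toFinset ∪ (normalizedFactors f.denom).toFinset ∪
      (normalizedFactors g.num).toFinset ∪ (normalizedFactors g.denom).toFinset := by
    rw [hSdef, normalizedFactors_mul (mul_ne_zero (mul_ne_zero n1 n2) n3) n4,
      normalizedFactors_mul (mul_ne_zero n1 n2) n3, normalizedFactors_mul n1 n2]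
    simp only [Multiset.toFinset_add]
  have s1 : (normalizedFactors f.num).toFinset ⊆ S := by rw [hSe]; grind
  have s2 : (normalizedFactors f.denom).toFinset ⊆ S := by rw [hSe]; grind
  have s3 : (normalizedFactors g.num).toFinset ⊆ S := by rw [hSe]; grind
  have s4 : (normalizedFactors g.denom).toFinset ⊆ S := by rw [hSe]; grind
  have hff := fac f S hS s1 s2
  have hgf := fac g S hS s3 s4
  have df := deg_eq f hf S hS s1 s2
  have dg := deg_eq g hg S hS s3 s4
  have hc : f.num.leadingCoeff ≠ 0 := leadingCoeff_ne_zero.2 n1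
  have hd : g.num.leadingCoeff ≠ 0 := leadingCoeff_ne_zero.2 n3
  set c := f.num.leadingCoeff
  set d := g.num.leadingCoeff
  have hinf : tameInf f g = (-1) ^ (f.intDegree * g.intDegree) * c ^ (-g.intDegree) *
      d ^ f.intDegree := by
    unfold tameInf ordInf
    rw [residueInf_eq S hS _ _ _ (combo S hS f g _ _ c d hff hgf _ _ _)]
    simp
  have hp : ∀ p ∈ S, Algebra.norm k (tameAt p f g) =
      ((-1) ^ (ordAt p f * ordAt p g)) ^ p.natDegree * c ^ (ordAt p g * p.natDegree) *
        d ^ (-(ordAt p f * p.natDegree)) *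
        ∏ q ∈ S, offNorm p q ^ (ordAt q f * ordAt p g + ordAt q g * (- ordAt p f)) := by
    intro p hp
    unfold tameAt
    rw [norm_residueAt S hS hI _ p hp (by ring) _ _ (combo S hS f g _ _ c d hff hgf _ _ _)]
    rw [mul_pow, mul_pow, ← neg_mul, zpow_mul c, zpow_mul d, zpow_natCast, zpow_natCast]
  rw [Finset.prod_congr rfl hp]
  simp only [Finset.prod_mul_distrib]
  rw [prod_zpow_sum _ hc, prod_zpow_sum _ hd, Finset.sum_neg_distrib, ← df, ← dg, hinf]
  have hs := sign_part S hS hI (fun q => ordAt q f) (fun q => ordAt q g)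
  simp only [← df, ← dg] at hs
  generalize (∏ p ∈ S, ((-1 : k) ^ (ordAt p f * ordAt p g)) ^ p.natDegree) = X at hs ⊢
  generalize (∏ p ∈ S, ∏ q ∈ S, offNorm p q ^ (ordAt q f * ordAt p g + ordAt q g * (- ordAt p f))) = Y at hs ⊢
  have hsq : ((-1 : k) ^ (f.intDegree * g.intDegree)) * (-1) ^ (f.intDegree * g.intDegree) = 1 := by
    rw [← mul_zpow]; simp
  have h1 : c ^ g.intDegree * c ^ (-g.intDegree) = 1 := by
    rw [← zpow_add₀ hc]; simp
  have h2 : d ^ (-f.intDegree) * d ^ f.intDegree = 1 := by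
    rw [← zpow_add₀ hd]; simp
  calc _ = (X * Y) * (-1) ^ (f.intDegree * g.intDegree) * (c ^ g.intDegree * c ^ (-g.intDegree)) *
        (d ^ (-f.intDegree) * d ^ f.intDegree) := by ring
    _ = 1 := by rw [hs, hsq, h1, h2]; simp
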